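/- arXiv:2404.05948 — 3 statements merged into one kernel-verified Lean document; each statement's English description precedes it below -/
import Mathlib

section
/- Let a, b ∈ F_p be nonzero floating-point numbers with ufp(a) ≤ ufp(b) and uls(a) ≥ ulp(b). Suppose s is a faithful rounding of a + b, d is a faithful rounding of s − a, and t is a faithful rounding of b − d, where the three roundings may be chosen independently (different rounding directions are allowed). Then s + t = a + b exactly. -/
/-!
Let `u = ulp b`. Since `ulp b ≤ uls a` and `ufp a ≤ ufp b`, both operands are multiples of `u` of
absolute value less than `2 ^ p * u`, and every multiple of `u` of absolute value at most
`2 ^ p * u` is a floating-point number. If `a + b` is not one, then it exceeds `2 ^ p * u` in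
absolute value, where the floating-point numbers are multiples of `2 * u`; being an odd multiple of
`u`, it is midway between its two floating-point neighbours `a + b - u` and `a + b + u`. In all
cases `s = a + b + e` with `e` a multiple of `u` and `|e| ≤ u`. Hence `s - a = b + e` and
`b - (s - a) = -e` are multiples of `u` of absolute value at most `2 ^ p * u`, and the last two
operations are exact.
-/

/-- The radix-2, precision-`p` floating-point numbers with unlimited exponent range. -/
def Fp (p : ℕ) : Set ℝ := {x : ℝ | ∃ M e : ℤ, |M| ≤ 2 ^ p - 1 ∧ x = (M : ℝ) * (2 : ℝ) ^ e}

/-- Round toward `-∞`: the largest floating-point number `≤ x`. -/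
noncomputable def RD (p : ℕ) (x : ℝ) : ℝ := sSup {f : ℝ | f ∈ Fp p ∧ f ≤ x}

/-- Round toward `+∞`: the smallest floating-point number `≥ x`. -/
noncomputable def RU (p : ℕ) (x : ℝ) : ℝ := sInf {f : ℝ | f ∈ Fp p ∧ x ≤ f}

/-- `y` is a faithful rounding of `x`. -/
def Faithful (p : ℕ) (x y : ℝ) : Prop := y = RD p x ∨ y = RU p x

/-- Unit in the first place: `2 ^ ⌊log₂ |x|⌋` (for nonzero `x`). -/
noncomputable def ufp (x : ℝ) : ℝ := (2 : ℝ) ^ (Int.log 2 |x|)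

/-- Unit in the last place: `2 ^ (⌊log₂ |x|⌋ - p + 1)` (for nonzero `x`). -/
noncomputable def ulp (p : ℕ) (x : ℝ) : ℝ := (2 : ℝ) ^ (Int.log 2 |x| - (p : ℤ) + 1)

/-- Unit in the last significant place: the largest power `2 ^ k` such that
`x · 2 ^ (-k)` is an integer (for nonzero `x ∈ F_p`). -/
noncomputable def uls (x : ℝ) : ℝ :=
  sSup {y : ℝ | ∃ k : ℤ, y = (2 : ℝ) ^ k ∧ ∃ m : ℤ, x = (m : ℝ) * (2 : ℝ) ^ k}

open AddSubgroup (zmultiples)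

lemma sub_mem_zmultiples_two_nsmul {G : Type*} [AddGroup G] {u x : G}
    (hx : x ∈ zmultiples u) (hx' : x ∉ zmultiples (2 • u)) : x - u ∈ zmultiples (2 • u) := by
  obtain ⟨m, rfl⟩ := hx
  rcases Int.even_or_odd' m with ⟨j, rfl | rfl⟩
  · exact absurd ⟨j, by simp [mul_zsmul', ofNat_zsmul]⟩ hx'
  · exact ⟨j, by simp [add_zsmul, mul_zsmul', ofNat_zsmul]⟩

lemma add_le_of_lt_of_mem_zmultiples {G : Type*} [AddCommGroup G] [LinearOrder G]
    [IsOrderedAddMonoid G] {u x y : G} (hu : 0 < u) (hx : x ∈ zmultiples u)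
    (hy : y ∈ zmultiples u) (hxy : x < y) : x + u ≤ y := by
  obtain ⟨m, rfl⟩ := hx
  obtain ⟨n, rfl⟩ := hy
  have hmn : m < n := (zsmul_lt_zsmul_iff_left hu).mp hxy
  simpa [add_zsmul] using zsmul_le_zsmul_left hu.le (Int.add_one_le_of_lt hmn)

lemma two_pow_mul_mem_zmultiples {R : Type*} [Ring R] (n : ℕ) (u : R) :
    2 ^ n * u ∈ zmultiples u := by
  exact_mod_cast AddSubgroup.intCast_mul_mem_zmultiples u (2 ^ n)

lemma zmultiples_two_zpow_le {j k : ℤ} (hjk : j ≤ k) :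
    zmultiples ((2 : ℝ) ^ k) ≤ zmultiples ((2 : ℝ) ^ j) := by
  obtain ⟨i, rfl⟩ := Int.le.dest hjk
  rw [AddSubgroup.zmultiples_le]
  exact ⟨2 ^ i, by simp [zpow_add₀, mul_comm]⟩

lemma mem_Fp_of_mem_zmultiples {p : ℕ} (hp : p ≠ 0) {k : ℤ} {x : ℝ}
    (hx : x ∈ zmultiples ((2 : ℝ) ^ k)) (hxp : |x| ≤ 2 ^ p * 2 ^ k) : x ∈ Fp p := by
  obtain ⟨m, rfl⟩ := hx
  have hm : |m| ≤ 2 ^ p := by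
    have hu : (0 : ℝ) < 2 ^ k := by positivity
    simp only [zsmul_eq_mul, abs_mul, abs_of_pos hu] at hxp
    exact_mod_cast le_of_mul_le_mul_right hxp hu
  have one_le : (1 : ℤ) ≤ 2 ^ p - 1 := by
    have := pow_le_pow_right₀ (one_le_two (α := ℤ)) (Nat.one_le_iff_ne_zero.mpr hp)
    omega
  rcases hm.lt_or_eq with hlt | heq
  · exact ⟨m, k, by omega, by simp⟩
  · rcases eq_or_eq_neg_of_abs_eq heq with rfl | rfl
    · exact ⟨1, p + k, by simpa using one_le, by simp [zpow_add₀]⟩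
    · exact ⟨-1, p + k, by simpa using one_le, by simp [zpow_add₀]⟩

lemma Fp.mem_zmultiples_of_le_abs {p : ℕ} {k : ℤ} {f : ℝ} (hf : f ∈ Fp p)
    (hle : 2 ^ p * 2 ^ k ≤ |f|) : f ∈ zmultiples ((2 : ℝ) ^ (k + 1)) := by
  obtain ⟨M, e, hM, rfl⟩ := hf
  have hMp : |(M : ℝ)| < 2 ^ p := by exact_mod_cast Int.lt_of_le_sub_one hM
  have hke : k < e := by
    rw [abs_mul, abs_of_pos (a := (2 : ℝ) ^ e) (by positivity)] at hle
    have hlt : (2 : ℝ) ^ p * 2 ^ k < 2 ^ p * 2 ^ e := hle.trans_lt (by gcongr)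
    exact (zpow_lt_zpow_iff_right₀ one_lt_two).mp (lt_of_mul_lt_mul_left hlt (by positivity))
  exact zmultiples_two_zpow_le (Int.add_one_le_of_lt hke)
    (AddSubgroup.intCast_mul_mem_zmultiples _ _)

lemma Fp.disjoint_Ioo {p : ℕ} {k : ℤ} {x : ℝ}
    (hx : x - 2 ^ k ∈ zmultiples ((2 : ℝ) ^ (k + 1))) (hpx : 2 ^ p * 2 ^ k + 2 ^ k ≤ |x|) :
    Disjoint (Fp p) (Set.Ioo (x - 2 ^ k) (x + 2 ^ k)) := by
  rw [Set.disjoint_left]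
  rintro f hf ⟨hlo, hhi⟩
  have hfx : |x - f| < 2 ^ k := abs_lt.mpr ⟨by linarith, by linarith⟩
  have hfp : 2 ^ p * 2 ^ k ≤ |f| := by linarith [abs_sub_abs_le_abs_sub x f]
  have hstep := add_le_of_lt_of_mem_zmultiples (by positivity) hx
    (Fp.mem_zmultiples_of_le_abs hf hfp) hlo
  rw [zpow_add_one₀ two_ne_zero] at hstep
  linarith

namespace Faithful

variable {p : ℕ} {x y : ℝ}

lemma eq_of_mem (hx : x ∈ Fp p) (h : Faithful p x y) : y = x := by
  rcases h with rfl | rfl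
  · exact IsGreatest.csSup_eq ⟨⟨hx, le_rfl⟩, fun f hf ↦ hf.2⟩
  · exact IsLeast.csInf_eq ⟨⟨hx, le_rfl⟩, fun f hf ↦ hf.2⟩

lemma eq_or_eq_of_disjoint_Ioo {l r : ℝ} (hl : l ∈ Fp p) (hr : r ∈ Fp p)
    (hgap : Disjoint (Fp p) (Set.Ioo l r)) (hx : x ∈ Set.Ioo l r) (h : Faithful p x y) :
    y = l ∨ y = r := by
  rw [Set.disjoint_left] at hgap
  refine h.imp (fun hy ↦ ?_) (fun hy ↦ ?_)
  · refine hy.trans (IsGreatest.csSup_eq ⟨⟨hl, hx.1.le⟩, fun f ⟨hf, hfx⟩ ↦ ?_⟩)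
    exact not_lt.mp fun hlf ↦ hgap hf ⟨hlf, hfx.trans_lt hx.2⟩
  · refine hy.trans (IsLeast.csInf_eq ⟨⟨hr, hx.2.le⟩, fun f ⟨hf, hxf⟩ ↦ ?_⟩)
    exact not_lt.mp fun hfr ↦ hgap hf ⟨hx.1.trans_le hxf, hfr⟩

lemma eq_sub_or_eq_add_of_notMem (hp : p ≠ 0) {k : ℤ} (hx : x ∈ zmultiples ((2 : ℝ) ^ k))
    (hxp : |x| < 2 ^ p * 2 ^ (k + 1)) (hxF : x ∉ Fp p) (h : Faithful p x y) :
    y = x - 2 ^ k ∨ y = x + 2 ^ k := by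
  have hu : (0 : ℝ) < 2 ^ k := by positivity
  have htwo : (2 : ℝ) ^ (k + 1) = 2 • 2 ^ k := by
    rw [zpow_add_one₀ two_ne_zero, two_nsmul, mul_two]
  have hpx : 2 ^ p * 2 ^ k + 2 ^ k ≤ |x| :=
    add_le_of_lt_of_mem_zmultiples hu (two_pow_mul_mem_zmultiples p _) (abs_mem_iff.mpr hx)
      (not_le.mp fun hle ↦ hxF (mem_Fp_of_mem_zmultiples hp hx hle))
  have hx' : x ∉ zmultiples ((2 : ℝ) ^ (k + 1)) :=
    fun hmem ↦ hxF (mem_Fp_of_mem_zmultiples hp hmem hxp.le)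
  have hsub : x - 2 ^ k ∈ zmultiples ((2 : ℝ) ^ (k + 1)) := by
    rw [htwo] at hx' ⊢
    exact sub_mem_zmultiples_two_nsmul hx hx'
  have hadd : x + 2 ^ k ∈ zmultiples ((2 : ℝ) ^ (k + 1)) := by
    convert add_mem hsub (AddSubgroup.mem_zmultiples _) using 1
    rw [htwo, two_nsmul]
    abel
  have hxle : |x| + 2 ^ k ≤ 2 ^ p * 2 ^ (k + 1) :=
    add_le_of_lt_of_mem_zmultiples hu (abs_mem_iff.mpr hx)
      (zmultiples_two_zpow_le (Int.le_add_one le_rfl) (two_pow_mul_mem_zmultiples p _)) hxp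
  have hxu : ∀ ε : ℝ, |ε| = 2 ^ k → |x + ε| ≤ 2 ^ p * 2 ^ (k + 1) :=
    fun ε hε ↦ (abs_add_le x ε).trans (hε ▸ hxle)
  refine eq_or_eq_of_disjoint_Ioo (mem_Fp_of_mem_zmultiples hp hsub ?_)
    (mem_Fp_of_mem_zmultiples hp hadd ?_) (Fp.disjoint_Ioo hsub hpx) ⟨by linarith, by linarith⟩ h
  · exact hxu (-2 ^ k) (by simp)
  · exact hxu (2 ^ k) (by simp)

lemma sub_mem_zmultiples_and_abs_sub_le (hp : p ≠ 0) {k : ℤ}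
    (hx : x ∈ zmultiples ((2 : ℝ) ^ k)) (hxp : |x| < 2 ^ p * 2 ^ (k + 1)) (h : Faithful p x y) :
    y - x ∈ zmultiples ((2 : ℝ) ^ k) ∧ |y - x| ≤ 2 ^ k := by
  by_cases hxF : x ∈ Fp p
  · simp [h.eq_of_mem hxF, zpow_nonneg]
  · rcases h.eq_sub_or_eq_add_of_notMem hp hx hxp hxF with rfl | rfl <;> simp

end Faithful

lemma fast2Sum_exact_of_mem_zmultiples {p : ℕ} (hp : p ≠ 0) {k : ℤ} {a b s d t : ℝ}
    (ha : a ∈ zmultiples ((2 : ℝ) ^ k)) (hb : b ∈ zmultiples ((2 : ℝ) ^ k))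
    (hap : |a| ≤ 2 ^ p * 2 ^ k) (hbp : |b| < 2 ^ p * 2 ^ k)
    (hs : Faithful p (a + b) s) (hd : Faithful p (s - a) d) (ht : Faithful p (b - d) t) :
    s + t = a + b := by
  have hbk : |b| + 2 ^ k ≤ 2 ^ p * 2 ^ k :=
    add_le_of_lt_of_mem_zmultiples (by positivity) (abs_mem_iff.mpr hb)
      (two_pow_mul_mem_zmultiples p _) hbp
  have hab : |a + b| < 2 ^ p * 2 ^ (k + 1) := by
    rw [zpow_add_one₀ two_ne_zero]
    linarith [abs_add_le a b]
  obtain ⟨he, hek⟩ := hs.sub_mem_zmultiples_and_abs_sub_le hp (add_mem ha hb) hab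
  have hsa : s - a = b + (s - (a + b)) := by ring
  have hd_eq : d = s - a := by
    refine hd.eq_of_mem (mem_Fp_of_mem_zmultiples hp (k := k) ?_ ?_) <;> rw [hsa]
    · exact add_mem hb he
    · linarith [abs_add_le b (s - (a + b))]
  have hbd : b - d = -(s - (a + b)) := by rw [hd_eq]; ring
  have ht_eq : t = b - d := by
    refine ht.eq_of_mem (mem_Fp_of_mem_zmultiples hp (k := k) ?_ ?_) <;> rw [hbd]
    · exact neg_mem he
    · rw [abs_neg]
      linarith [abs_nonneg b]
  linarith

lemma ufp_le_abs {x : ℝ} (hx : x ≠ 0) : ufp x ≤ |x| := by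
  exact_mod_cast Int.zpow_log_le_self one_lt_two (abs_pos.mpr hx)

lemma abs_lt_two_mul_ufp (x : ℝ) : |x| < 2 * ufp x := by
  rw [ufp, ← zpow_one_add₀ two_ne_zero, add_comm]
  exact_mod_cast Int.lt_zpow_succ_log_self one_lt_two |x|

lemma two_pow_mul_ulp (p : ℕ) (x : ℝ) : 2 ^ p * ulp p x = 2 * ufp x := by
  rw [ulp, ufp, ← zpow_natCast, ← zpow_add₀ two_ne_zero, ← zpow_one_add₀ two_ne_zero]
  congr 1
  ring

lemma Fp.mem_zmultiples_ulp {p : ℕ} {x : ℝ} (hx : x ∈ Fp p) (hx0 : x ≠ 0) :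
    x ∈ zmultiples (ulp p x) := by
  refine Fp.mem_zmultiples_of_le_abs hx (le_trans (le_of_eq ?_) (ufp_le_abs hx0))
  rw [ufp, ← zpow_natCast, ← zpow_add₀ two_ne_zero, add_sub_cancel]

lemma mem_zmultiples_of_two_zpow_le_uls {x : ℝ} {k : ℤ} (hk : 2 ^ k ≤ uls x) :
    x ∈ zmultiples ((2 : ℝ) ^ k) := by
  by_contra hx
  have huls : uls x ≤ 2 ^ (k - 1) := by
    refine Real.sSup_le ?_ (by positivity)
    rintro _ ⟨j, rfl, m, rfl⟩
    have hjk : j < k := not_le.mp fun hkj ↦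
      hx (zmultiples_two_zpow_le hkj (AddSubgroup.intCast_mul_mem_zmultiples _ _))
    exact zpow_le_zpow_right₀ one_le_two (Int.le_sub_one_of_lt hjk)
  exact (hk.trans huls).not_gt (zpow_lt_zpow_right₀ one_lt_two (sub_one_lt k))

/-- If `a, b ∈ F_p` are nonzero with `ufp a ≤ ufp b` and `uls a ≥ ulp b`, then the
Fast2Sum algorithm executed with (independently chosen) faithful roundings is exact:
`s + t = a + b`. -/
theorem fast2Sum_exact_of_uls_ge_ulp
    (p : ℕ) (hp : 2 ≤ p) (a b : ℝ)
    (ha : a ∈ Fp p) (hb : b ∈ Fp p) (ha0 : a ≠ 0) (hb0 : b ≠ 0)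
    (hufp : ufp a ≤ ufp b) (huls : ulp p b ≤ uls a)
    (s d t : ℝ)
    (hs : Faithful p (a + b) s)
    (hd : Faithful p (s - a) d)
    (ht : Faithful p (b - d) t) :
    s + t = a + b := by
  have hap : |a| < 2 ^ p * ulp p b :=
    calc |a| < 2 * ufp a := abs_lt_two_mul_ufp a
      _ ≤ 2 * ufp b := by gcongr
      _ = 2 ^ p * ulp p b := (two_pow_mul_ulp p b).symm
  have hbp : |b| < 2 ^ p * ulp p b := (abs_lt_two_mul_ufp b).trans_eq (two_pow_mul_ulp p b).symm
  exact fast2Sum_exact_of_mem_zmultiples (by omega) (mem_zmultiples_of_two_zpow_le_uls huls)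
    (Fp.mem_zmultiples_ulp hb hb0) hap.le hbp hs hd ht
end

section
/- Let p ≥ 2, a = 2^(−1) + 2^(−p) and b = 1 + 2^(1−p); then a, b ∈ F_p and uls(a) = ulp(b)/2. If the Fast2Sum algorithm is executed with RD at every step, i.e. s = RD(a + b), d = RD(s − a), t = RD(b − d), then s + t − (a + b) = 2^(−p); in particular s + t ≠ a + b. (This shows that the condition uls(a) ≥ ulp(b) in the exactness lemma for Fast2Sum under faithful rounding cannot be weakened.) -/
/-!
With `u = 2⁻ᵖ` we have `a = 1/2 + u`, `b = 1 + 2u` and `a + b = 3/2 + 3u`. Floats of absolute value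
at least `1` are multiples of `2u`, so `a + b`, which lies halfway between two such multiples, is
rounded down to `s = 3/2 + 2u`. Then `s - a = 1 + u` is again halfway and is rounded down to
`d = 1`, while `b - d = 2u` is itself a float. Hence `s + t = 3/2 + 4u`: subtracting `a`, which is
only a multiple of `u`, is what makes the rounding of `s - a` inexact.
-/

section

variable {p : ℕ}

theorem intCast_mul_zpow_mem_Fp (hp : p ≠ 0) {M : ℤ} (hM : |M| ≤ 2 ^ p) (e : ℤ) :
    (M : ℝ) * (2 : ℝ) ^ e ∈ Fp p := by
  rcases hM.lt_or_eq with hlt | heq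
  · exact ⟨M, e, Int.le_sub_one_of_lt hlt, rfl⟩
  -- The significand `± 2 ^ p` is one too large, but `± 1` represents the same number.
  · have htwo : (2 : ℤ) ≤ 2 ^ p := le_self_pow₀ one_le_two hp
    have hshift : ((2 : ℝ) ^ p) * 2 ^ e = 2 ^ (p + e) := by
      rw [zpow_add₀ two_ne_zero, zpow_natCast]
    rcases (abs_eq (by positivity)).mp heq with rfl | rfl
    · exact ⟨1, p + e, by rw [abs_one]; omega, by push_cast; rw [hshift, one_mul]⟩
    · exact ⟨-1, p + e, by rw [abs_neg, abs_one]; omega, by push_cast; rw [neg_mul, hshift]; ring⟩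

theorem zpow_mem_Fp (hp : p ≠ 0) (e : ℤ) : (2 : ℝ) ^ e ∈ Fp p := by
  simpa using intCast_mul_zpow_mem_Fp hp (M := 1) (by simpa using one_le_pow₀ one_le_two) e

theorem exists_eq_intCast_mul_zpow_of_mem_Fp {f : ℝ} (hf : f ∈ Fp p) {e : ℤ}
    (hfe : (2 : ℝ) ^ (p + e - 1) ≤ |f|) : ∃ m : ℤ, f = m * (2 : ℝ) ^ e := by
  obtain ⟨M, k, hM, rfl⟩ := hf
  have hek : e ≤ k := by
    by_contra! hke
    have hM' : |(M : ℝ)| < 2 ^ p := by exact_mod_cast Int.lt_of_le_sub_one hM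
    refine hfe.not_gt ?_
    calc |(M : ℝ) * 2 ^ k| = |(M : ℝ)| * 2 ^ k := by
          rw [abs_mul, abs_zpow, abs_two]
      _ < 2 ^ p * 2 ^ k := by gcongr
      _ = 2 ^ (p + k) := by rw [zpow_add₀ two_ne_zero, zpow_natCast]
      _ ≤ 2 ^ (p + e - 1) := zpow_le_zpow_right₀ one_le_two (by omega)
  obtain ⟨j, rfl⟩ := Int.le.dest hek
  exact ⟨M * 2 ^ j, by rw [zpow_add₀ two_ne_zero, zpow_natCast]; push_cast; ring⟩

theorem RD_eq_self_of_mem_Fp {x : ℝ} (hx : x ∈ Fp p) : RD p x = x :=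
  IsGreatest.csSup_eq ⟨⟨hx, le_rfl⟩, fun _ hg ↦ hg.2⟩

theorem RD_eq_of_mem_Ico {f x : ℝ} {e : ℤ} (hf : f ∈ Fp p) (hfe : (2 : ℝ) ^ (p + e - 1) ≤ f)
    (hx : x ∈ Set.Ico f (f + 2 ^ e)) : RD p x = f := by
  refine IsGreatest.csSup_eq ⟨⟨hf, hx.1⟩, ?_⟩
  rintro g ⟨hg, hgx⟩
  by_contra! hfg
  have he : (0 : ℝ) < 2 ^ e := by positivity
  obtain ⟨N, rfl⟩ := exists_eq_intCast_mul_zpow_of_mem_Fp hf (hfe.trans (le_abs_self f))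
  obtain ⟨M, rfl⟩ := exists_eq_intCast_mul_zpow_of_mem_Fp hg
    (hfe.trans (hfg.le.trans (le_abs_self g)))
  have hNM : N < M := by exact_mod_cast lt_of_mul_lt_mul_right hfg he.le
  have hMN : M < N + 1 := by
    have hlt : (M : ℝ) * 2 ^ e < (N + 1) * 2 ^ e := by linarith [hgx.trans_lt hx.2]
    exact_mod_cast lt_of_mul_lt_mul_right hlt he.le
  omega

theorem RD_eq_zpow (hp : p ≠ 0) {x : ℝ} {E : ℤ}
    (hx : x ∈ Set.Ico ((2 : ℝ) ^ E) (2 ^ E + 2 ^ (E - p + 1))) : RD p x = (2 : ℝ) ^ E :=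
  RD_eq_of_mem_Ico (zpow_mem_Fp hp E)
    (zpow_le_zpow_right₀ one_le_two (by omega)) hx

theorem ulp_eq_zpow {x : ℝ} {E : ℤ} (hx : |x| ∈ Set.Ico ((2 : ℝ) ^ E) (2 ^ (E + 1))) :
    ulp p x = (2 : ℝ) ^ (E - p + 1) := by
  have hx_pos : 0 < |x| := (zpow_pos two_pos E).trans_le hx.1
  have hlow : E ≤ Int.log 2 |x| :=
    (Int.zpow_le_iff_le_log one_lt_two hx_pos).mp (by exact_mod_cast hx.1)
  have hhigh : Int.log 2 |x| < E + 1 :=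
    (Int.lt_zpow_iff_log_lt one_lt_two hx_pos).mp (by exact_mod_cast hx.2)
  rw [ulp, show Int.log 2 |x| = E by omega]

theorem uls_intCast_mul_zpow_of_odd {m : ℤ} (hm : Odd m) (e : ℤ) :
    uls ((m : ℝ) * (2 : ℝ) ^ e) = (2 : ℝ) ^ e := by
  refine IsGreatest.csSup_eq ⟨⟨e, rfl, m, rfl⟩, ?_⟩
  rintro _ ⟨k, rfl, n, hn⟩
  refine zpow_le_zpow_right₀ one_le_two ?_
  by_contra! hek
  obtain ⟨j, rfl⟩ := Int.le.dest (Int.add_one_le_of_lt hek)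
  have hm_real : (m : ℝ) = n * (2 * 2 ^ j) := by
    refine mul_right_cancel₀ (zpow_ne_zero e two_ne_zero) (hn.trans ?_)
    rw [zpow_add₀ two_ne_zero, zpow_add_one₀ two_ne_zero, zpow_natCast]
    ring
  have hm_eq : m = 2 * (n * 2 ^ j) := by
    rw [mul_left_comm]
    exact_mod_cast hm_real
  exact Int.not_even_iff_odd.mpr hm (hm_eq ▸ even_two_mul _)

theorem natCast_mul_zpow_add_zpow (m n : ℕ) (e : ℤ) :
    (m : ℝ) * 2 ^ (e + n) + 2 ^ e = ((m * 2 ^ n + 1 : ℤ) : ℝ) * 2 ^ e := by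
  rw [zpow_add₀ two_ne_zero, zpow_natCast]
  push_cast
  ring

theorem natCast_mul_zpow_add_zpow_mem_Fp (hp : p ≠ 0) {m j : ℕ} (hm : m < 2 ^ j) {k e : ℤ}
    (hek : e ≤ k) (hkj : k + j ≤ e + p) : (m : ℝ) * 2 ^ k + 2 ^ e ∈ Fp p := by
  obtain ⟨n, rfl⟩ := Int.le.dest hek
  have hbound : m * 2 ^ n + 1 ≤ 2 ^ p :=
    calc m * 2 ^ n + 1 ≤ (m + 1) * 2 ^ n := by
          rw [add_one_mul]; gcongr; exact Nat.one_le_two_pow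
      _ ≤ 2 ^ j * 2 ^ n := by gcongr; exact hm
      _ = 2 ^ (j + n) := (pow_add 2 j n).symm
      _ ≤ 2 ^ p := Nat.pow_le_pow_right two_pos (by omega)
  rw [natCast_mul_zpow_add_zpow]
  refine intCast_mul_zpow_mem_Fp hp ?_ e
  rw [abs_of_pos (by positivity)]
  exact_mod_cast hbound

theorem zpow_add_zpow_mem_Fp {k e : ℤ} (hek : e ≤ k) (hkp : k < e + p) :
    (2 : ℝ) ^ k + 2 ^ e ∈ Fp p := by
  simpa using natCast_mul_zpow_add_zpow_mem_Fp (p := p) (m := 1) (j := 1) (by omega) (by omega) hek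
    (by omega)

theorem RD_eq_three_halves_add_zpow (hp : 2 ≤ p) {x : ℝ}
    (hx : x ∈ Set.Ico (3 / 2 + (2 : ℝ) ^ (1 - (p : ℤ))) (3 / 2 + 2 * 2 ^ (1 - (p : ℤ)))) :
    RD p x = 3 / 2 + (2 : ℝ) ^ (1 - (p : ℤ)) := by
  have hmem : 3 / 2 + (2 : ℝ) ^ (1 - (p : ℤ)) ∈ Fp p := by
    simpa [div_eq_mul_inv] using natCast_mul_zpow_add_zpow_mem_Fp (p := p) (m := 3) (j := 2)
      (k := -1) (e := 1 - p) (by omega) (by omega) (by omega) (by omega)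
  have hpos : (0 : ℝ) < 2 ^ (1 - (p : ℤ)) := by positivity
  refine RD_eq_of_mem_Ico (e := 1 - p) hmem ?_ ⟨hx.1, by linarith [hx.2]⟩
  rw [add_sub_cancel, sub_self, zpow_zero]
  linarith

theorem uls_zpow_add_zpow {k e : ℤ} (hek : e < k) : uls ((2 : ℝ) ^ k + 2 ^ e) = 2 ^ e := by
  obtain ⟨n, rfl⟩ := Int.le.dest hek.le
  have heven : Even ((2 : ℤ) ^ n) := even_two.pow_of_ne_zero (by omega)
  have hsum : (2 : ℝ) ^ (e + n) + 2 ^ e = ((2 ^ n + 1 : ℤ) : ℝ) * 2 ^ e := by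
    simpa using natCast_mul_zpow_add_zpow 1 n e
  rw [hsum, uls_intCast_mul_zpow_of_odd heven.add_one]

theorem ulp_zpow_add_zpow {k e : ℤ} (hek : e < k) :
    ulp p ((2 : ℝ) ^ k + 2 ^ e) = 2 ^ (k - p + 1) := by
  refine ulp_eq_zpow ?_
  rw [abs_of_pos (by positivity), zpow_add_one₀ two_ne_zero, mul_two]
  exact ⟨le_add_of_nonneg_right (by positivity), by gcongr; exact one_lt_two⟩

end

/-- For `a = 2⁻¹ + 2⁻ᵖ` and `b = 1 + 2^(1-p)` (which lie in `F_p` and satisfy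
`uls a = ulp b / 2`), Fast2Sum executed with RD at every step produces
`s + t - (a + b) = 2⁻ᵖ`, in particular `s + t ≠ a + b`: the hypothesis
`uls a ≥ ulp b` of the exactness lemma cannot be weakened. -/
theorem fast2Sum_counterexample
    (p : ℕ) (hp : 2 ≤ p) (a b : ℝ)
    (ha : a = (2 : ℝ) ^ (-1 : ℤ) + (2 : ℝ) ^ (-(p : ℤ)))
    (hb : b = 1 + (2 : ℝ) ^ (1 - (p : ℤ))) :
    a ∈ Fp p ∧ b ∈ Fp p ∧ uls a = ulp p b / 2 ∧
      (RD p (a + b) + RD p (b - RD p (RD p (a + b) - a)) - (a + b) = (2 : ℝ) ^ (-(p : ℤ)) ∧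
        RD p (a + b) + RD p (b - RD p (RD p (a + b) - a)) ≠ a + b) := by
  have hu : (2 : ℝ) ^ (1 - (p : ℤ)) = 2 * 2 ^ (-(p : ℤ)) := by
    rw [sub_eq_add_neg, zpow_one_add₀ two_ne_zero]
  have hu_pos : (0 : ℝ) < 2 ^ (-(p : ℤ)) := by positivity
  have ha_half : a = 1 / 2 + 2 ^ (-(p : ℤ)) := by rw [ha, zpow_neg_one, one_div]
  have hb_bits : b = 2 ^ (0 : ℤ) + 2 ^ (1 - (p : ℤ)) := by rw [hb, zpow_zero]
  have hs : RD p (a + b) = 3 / 2 + 2 ^ (1 - (p : ℤ)) :=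
    RD_eq_three_halves_add_zpow hp (by constructor <;> linarith)
  have hd : RD p (RD p (a + b) - a) = 1 := by
    rw [RD_eq_zpow (E := 0) (by omega), zpow_zero]
    rw [zero_sub, neg_add_eq_sub, zpow_zero]
    constructor <;> linarith
  have ht : RD p (b - 1) = 2 ^ (1 - (p : ℤ)) := by
    rw [hb, add_sub_cancel_left, RD_eq_self_of_mem_Fp (zpow_mem_Fp (by omega) _)]
  have herr : RD p (a + b) + RD p (b - RD p (RD p (a + b) - a)) - (a + b) = 2 ^ (-(p : ℤ)) := by
    rw [hd]
    linarith
  refine ⟨ha ▸ zpow_add_zpow_mem_Fp (by omega) (by omega),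
    hb_bits ▸ zpow_add_zpow_mem_Fp (by omega) (by omega), ?_, herr, fun h ↦ ?_⟩
  · rw [ha, hb_bits, uls_zpow_add_zpow (by omega), ulp_zpow_add_zpow (by omega), zero_sub,
      neg_add_eq_sub, hu, mul_div_cancel_left₀ _ two_ne_zero]
  · exact hu_pos.ne (by rw [← herr, h, sub_self])
end

section
/- Let p ≥ 6, u = 2^(1−p), and let o_x, o_y ∈ [1, 1/(8u) − 2]. Let x_h, x_l, y_h, y_l ∈ F_p satisfy |x_l| ≤ o_x·u·|x_h| and |y_l| ≤ o_y·u·|y_h|. In any execution of sloppy double-word addition in faithful rounding, if |w| > |s_h| then x_h·y_h < 0 and max(|x_h|, |y_h|) ≤ 2·min(|x_h|, |y_h|) (the hypothesis of Sterbenz's lemma holds), and consequently s_h = x_h + y_h exactly and s_l = 0. -/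
/-- All hypotheses of one execution of the sloppy double-word addition algorithm
(`2Sum(x_h,y_h)`, `v = ∘(x_l+y_l)`, `w = ∘(s_l+v)`, `Fast2Sum(s_h,w)`) in faithful
rounding, each rounding chosen independently. -/
def SloppyFaithful (p : ℕ) (xh xl yh yl sh a' b' da db sl v w zh d zl : ℝ) : Prop :=
  Faithful p (xh + yh) sh ∧ Faithful p (sh - yh) a' ∧ Faithful p (sh - a') b' ∧
  Faithful p (xh - a') da ∧ Faithful p (yh - b') db ∧ Faithful p (da + db) sl ∧
  Faithful p (xl + yl) v ∧ Faithful p (sl + v) w ∧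
  Faithful p (sh + w) zh ∧ Faithful p (zh - sh) d ∧ Faithful p (w - d) zl

section FloatingPoint

lemma zero_mem_Fp (p : ℕ) : (0 : ℝ) ∈ Fp p := by
  have : (1 : ℤ) ≤ 2 ^ p := one_le_pow₀ (by norm_num)
  exact ⟨0, 0, by simpa using this, by simp⟩

lemma mul_zpow_mem_Fp {p : ℕ} (hp : p ≠ 0) {m : ℤ} (hm : |m| ≤ 2 ^ p) (e : ℤ) :
    (m : ℝ) * (2 : ℝ) ^ e ∈ Fp p := by
  have two_le : (2 : ℤ) ≤ 2 ^ p := le_self_pow₀ (by norm_num) hp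
  rcases hm.lt_or_eq with hlt | heq
  · exact ⟨m, e, by lia, rfl⟩
  -- The significand `± 2 ^ p` overflows, but then the number is a power of two.
  have hpow : (2 : ℝ) ^ (e + p) = 2 ^ p * 2 ^ e := by
    rw [add_comm, zpow_add₀ two_ne_zero, zpow_natCast]
  rcases eq_or_eq_neg_of_abs_eq heq with rfl | rfl
  · exact ⟨1, e + p, by rw [abs_one]; lia, by rw [hpow]; push_cast; ring⟩
  · exact ⟨-1, e + p, by rw [abs_neg, abs_one]; lia, by rw [hpow]; push_cast; ring⟩

lemma exists_mem_Fp_le_le {p : ℕ} (hp : p ≠ 0) (x : ℝ) :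
    ∃ f ∈ Fp p, ∃ g ∈ Fp p, f ≤ x ∧ x ≤ g ∧ g - f ≤ (2 : ℝ) ^ (1 - (p : ℤ)) * |x| := by
  rcases eq_or_ne x 0 with rfl | hx
  · exact ⟨0, zero_mem_Fp p, 0, zero_mem_Fp p, le_rfl, le_rfl, by simp⟩
  obtain ⟨e, he_le, he_lt⟩ := exists_mem_Ico_zpow (abs_pos.2 hx) (one_lt_two : (1 : ℝ) < 2)
  -- `c` is the unit in the last place of `x`.
  set c : ℝ := 2 ^ (1 - (p : ℤ) + e) with hc
  have c_pos : 0 < c := by positivity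
  have hce : c = 2 ^ (1 - (p : ℤ)) * 2 ^ e := zpow_add₀ two_ne_zero _ _
  have hquot : |x / c| < (2 ^ p : ℤ) := by
    rw [abs_div, abs_of_pos c_pos, div_lt_iff₀ c_pos]
    convert he_lt using 1
    rw [hc]; push_cast
    rw [← zpow_natCast, ← zpow_add₀ two_ne_zero]
    congr 1; ring
  obtain ⟨hlo, hhi⟩ := abs_lt.1 hquot
  have hfloor : |⌊x / c⌋| ≤ 2 ^ p := abs_le.2
    ⟨Int.le_floor.2 (by exact_mod_cast hlo.le), (Int.floor_lt.2 hhi).le⟩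
  have hceil : |⌈x / c⌉| ≤ 2 ^ p := abs_le.2
    ⟨(Int.lt_ceil.2 (by exact_mod_cast hlo)).le, Int.ceil_le.2 hhi.le⟩
  refine ⟨⌊x / c⌋ * c, mul_zpow_mem_Fp hp hfloor _, ⌈x / c⌉ * c, mul_zpow_mem_Fp hp hceil _,
    (le_div_iff₀ c_pos).1 (Int.floor_le _), (div_le_iff₀ c_pos).1 (Int.le_ceil _), ?_⟩
  have gap : (⌈x / c⌉ : ℝ) ≤ ⌊x / c⌋ + 1 := by exact_mod_cast Int.ceil_le_floor_add_one _
  calc ⌈x / c⌉ * c - ⌊x / c⌋ * c ≤ c := by nlinarith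
    _ ≤ 2 ^ (1 - (p : ℤ)) * |x| := by rw [hce]; gcongr

lemma Faithful.mem_Icc {p : ℕ} {x y f g : ℝ} (h : Faithful p x y)
    (hf : f ∈ Fp p) (hg : g ∈ Fp p) (hfx : f ≤ x) (hxg : x ≤ g) : y ∈ Set.Icc f g := by
  rcases h with rfl | rfl
  · exact ⟨le_csSup ⟨x, fun _ h => h.2⟩ ⟨hf, hfx⟩, csSup_le ⟨f, hf, hfx⟩ fun _ h => h.2.trans hxg⟩
  · exact ⟨le_csInf ⟨g, hg, hxg⟩ fun _ h => hfx.trans h.2, csInf_le ⟨x, fun _ h => h.2⟩ ⟨hg, hxg⟩⟩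

lemma Faithful.eq_of_mem_s3 {p : ℕ} {x y : ℝ} (h : Faithful p x y) (hx : x ∈ Fp p) : y = x :=
  have hy := h.mem_Icc hx hx le_rfl le_rfl
  le_antisymm hy.2 hy.1

lemma Faithful.abs_sub_le {p : ℕ} (hp : p ≠ 0) {x y : ℝ} (h : Faithful p x y) :
    |y - x| ≤ (2 : ℝ) ^ (1 - (p : ℤ)) * |x| := by
  obtain ⟨f, hf, g, hg, hfx, hxg, hgap⟩ := exists_mem_Fp_le_le hp x
  obtain ⟨hfy, hyg⟩ := h.mem_Icc hf hg hfx hxg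
  exact (abs_le.2 ⟨by linarith, by linarith⟩).trans hgap

/-- The sum is a multiple of the smaller of the two quanta, and it does not exceed in magnitude
the operand having that quantum, so its significand fits. -/
lemma add_mem_Fp_of_abs_add_le_min {p : ℕ} {x y : ℝ} (hx : x ∈ Fp p) (hy : y ∈ Fp p)
    (h : |x + y| ≤ min |x| |y|) : x + y ∈ Fp p := by
  obtain ⟨M, e, hM, rfl⟩ := hx
  obtain ⟨N, k, hN, rfl⟩ := hy
  wlog hek : e ≤ k generalizing M N e k
  · rw [add_comm] at h ⊢
    exact this N k hN M e hM (by rwa [min_comm]) (by lia)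
  obtain ⟨n, rfl⟩ := Int.le.dest hek
  have hsum : (M : ℝ) * 2 ^ e + N * 2 ^ (e + n : ℤ) = ((M + N * 2 ^ n : ℤ) : ℝ) * 2 ^ e := by
    rw [zpow_add₀ two_ne_zero]; push_cast [zpow_natCast]; ring
  have hle := h.trans (min_le_left _ _)
  rw [hsum, abs_mul, abs_mul] at hle
  have hsig : |M + N * 2 ^ n| ≤ |M| := by
    exact_mod_cast le_of_mul_le_mul_right hle (by positivity)
  exact ⟨_, e, hsig.trans hM, hsum⟩

end FloatingPoint

section Sterbenz

/-- The hypothesis of Sterbenz's lemma, for a sum: the operands have opposite signs and are within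
a factor `2` of each other in magnitude. -/
def SterbenzPair (x y : ℝ) : Prop := x * y < 0 ∧ max |x| |y| ≤ 2 * min |x| |y|

variable {x y : ℝ}

lemma abs_add_eq_max_sub_min_of_mul_neg (h : x * y < 0) :
    |x + y| = max |x| |y| - min |x| |y| := by
  rw [max_sub_min_eq_abs']
  rcases mul_neg_iff.1 h with ⟨hx, hy⟩ | ⟨hx, hy⟩
  · rw [abs_of_pos hx, abs_of_neg hy, sub_neg_eq_add]
  · rw [abs_of_neg hx, abs_of_pos hy, ← abs_neg, neg_add']

lemma SterbenzPair.abs_add_le_min (h : SterbenzPair x y) : |x + y| ≤ min |x| |y| := by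
  rw [abs_add_eq_max_sub_min_of_mul_neg h.1]
  linarith [h.2]

lemma abs_add_abs_le_of_not_sterbenzPair (h : ¬ SterbenzPair x y) :
    |x| + |y| ≤ 3 * |x + y| := by
  rcases lt_or_ge (x * y) 0 with hneg | hnonneg
  · have hfar : 2 * min |x| |y| < max |x| |y| := not_le.1 fun hle => h ⟨hneg, hle⟩
    rw [abs_add_eq_max_sub_min_of_mul_neg hneg, ← min_add_max]
    linarith
  · rw [(abs_add_eq_add_abs_iff x y).2 (mul_nonneg_iff.1 hnonneg)]
    linarith [abs_nonneg x, abs_nonneg y]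

end Sterbenz

section TwoSum

/-- An execution of the 2Sum algorithm on `x` and `y`, with result `s` and error term `t`, where
`R r r'` says that `r'` is an admissible rounding of the exact value `r`. Each operation rounds
independently, so `R` is a relation rather than a function. -/
structure TwoSum (R : ℝ → ℝ → Prop) (x y s a b da db t : ℝ) : Prop where
  sum : R (x + y) s
  left : R (s - y) a
  right : R (s - a) b
  left_error : R (x - a) da
  right_error : R (y - b) db
  error : R (da + db) t

variable {R : ℝ → ℝ → Prop} {x y s a b da db t ε : ℝ}

lemma TwoSum.eq_add_and_error_eq_zero {F : Set ℝ} (hR : ∀ ⦃r r'⦄, R r r' → r ∈ F → r' = r)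
    (h : TwoSum R x y s a b da db t) (hx : x ∈ F) (hy : y ∈ F) (hxy : x + y ∈ F) (h0 : 0 ∈ F) :
    s = x + y ∧ t = 0 := by
  obtain ⟨hs, ha, hb, hda, hdb, ht⟩ := h
  obtain rfl := hR hs hxy
  rw [add_sub_cancel_right] at ha
  obtain rfl := hR ha hx
  rw [add_sub_cancel_left] at hb
  obtain rfl := hR hb hy
  rw [sub_self] at hda hdb
  obtain rfl := hR hda h0
  obtain rfl := hR hdb h0
  rw [add_zero] at ht
  exact ⟨rfl, hR ht h0⟩

lemma abs_le_of_abs_sub_le_mul {r r' : ℝ} (h : |r' - r| ≤ ε * |r|) : |r'| ≤ (1 + ε) * |r| := by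
  linarith [abs_sub_abs_le_abs_sub r' r]

lemma TwoSum.abs_error_le (hε : 0 ≤ ε) (hR : ∀ ⦃r r'⦄, R r r' → |r' - r| ≤ ε * |r|)
    (h : TwoSum R x y s a b da db t) :
    |t| ≤ ε * (1 + ε) ^ 2 * ((1 + ε) ^ 2 * |x + y| + (2 + ε) * |x| + |y|) := by
  set δs := s - (x + y) with hδs
  set δa := a - (s - y) with hδa
  set δb := b - (s - a) with hδb
  have le_δs : |δs| ≤ ε * |x + y| := hR h.sum
  have le_δa : |δa| ≤ ε * (|x| + ε * |x + y|) :=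
    calc |δa| ≤ ε * |s - y| := hR h.left
      _ = ε * |x + δs| := by rw [hδs]; congr 2; ring
      _ ≤ ε * (|x| + ε * |x + y|) := by gcongr; exact (abs_add_le _ _).trans (by gcongr)
  have le_δb : |δb| ≤ ε * (|y| + |δa|) :=
    calc |δb| ≤ ε * |s - a| := hR h.right
      _ = ε * |y - δa| := by rw [hδa]; congr 2; ring
      _ ≤ ε * (|y| + |δa|) := by gcongr; exact abs_sub _ _
  have le_da : |da| ≤ (1 + ε) * (|δs| + |δa|) :=
    calc |da| ≤ (1 + ε) * |x - a| := abs_le_of_abs_sub_le_mul (hR h.left_error)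
      _ = (1 + ε) * |δs + δa| := by rw [hδs, hδa, ← abs_neg]; congr 2; ring
      _ ≤ (1 + ε) * (|δs| + |δa|) := by gcongr; exact abs_add_le _ _
  have le_db : |db| ≤ (1 + ε) * (|δa| + |δb|) :=
    calc |db| ≤ (1 + ε) * |y - b| := abs_le_of_abs_sub_le_mul (hR h.right_error)
      _ = (1 + ε) * |δa - δb| := by rw [hδa, hδb]; congr 2; ring
      _ ≤ (1 + ε) * (|δa| + |δb|) := by gcongr; exact abs_sub _ _
  calc |t| ≤ (1 + ε) * |da + db| := abs_le_of_abs_sub_le_mul (hR h.error)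
    _ ≤ (1 + ε) * ((1 + ε) * (|δs| + |δa|) + (1 + ε) * (|δa| + |δb|)) := by
      gcongr; exact (abs_add_le _ _).trans (add_le_add le_da le_db)
    _ = (1 + ε) ^ 2 * (|δs| + 2 * |δa| + |δb|) := by ring
    _ ≤ (1 + ε) ^ 2 * (|δs| + 2 * |δa| + ε * (|y| + |δa|)) := by gcongr
    _ ≤ (1 + ε) ^ 2 * (ε * |x + y| + 2 * (ε * (|x| + ε * |x + y|))
          + ε * (|y| + ε * (|x| + ε * |x + y|))) := by gcongr
    _ = ε * (1 + ε) ^ 2 * ((1 + ε) ^ 2 * |x + y| + (2 + ε) * |x| + |y|) := by ring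

lemma TwoSum.abs_error_le_of_not_sterbenzPair (hε : 0 ≤ ε)
    (hR : ∀ ⦃r r'⦄, R r r' → |r' - r| ≤ ε * |r|) (h : TwoSum R x y s a b da db t)
    (hxy : ¬ SterbenzPair x y) :
    |t| ≤ ε * (1 + ε) ^ 2 * (6 + 4 * ε + ε ^ 2) * |x + y| := by
  have hadd : |x| + |y| ≤ 3 * |x + y| := abs_add_abs_le_of_not_sterbenzPair hxy
  have hx : |x| ≤ 2 * |x + y| := by
    have : |x| ≤ |x + y| + |y| := by simpa using abs_sub (x + y) y
    linarith
  calc |t| ≤ ε * (1 + ε) ^ 2 * ((1 + ε) ^ 2 * |x + y| + (2 + ε) * |x| + |y|) :=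
        h.abs_error_le hε hR
    _ = ε * (1 + ε) ^ 2 * ((1 + ε) ^ 2 * |x + y| + (1 + ε) * |x| + (|x| + |y|)) := by ring
    _ ≤ ε * (1 + ε) ^ 2 * ((1 + ε) ^ 2 * |x + y| + (1 + ε) * (2 * |x + y|) + 3 * |x + y|) := by
      gcongr
    _ = ε * (1 + ε) ^ 2 * (6 + 4 * ε + ε ^ 2) * |x + y| := by ring

end TwoSum

section SloppyAddition

variable {p : ℕ} {xh xl yh yl sh a' b' da db sl v w zh d zl : ℝ}

lemma SloppyFaithful.twoSum
    (h : SloppyFaithful p xh xl yh yl sh a' b' da db sl v w zh d zl) :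
    TwoSum (Faithful p) xh yh sh a' b' da db sl :=
  let ⟨hsh, ha, hb, hda, hdb, hsl, _⟩ := h
  ⟨hsh, ha, hb, hda, hdb, hsl⟩

lemma SloppyFaithful.abs_le_abs_of_not_sterbenzPair (hp : 5 ≤ p)
    (hx : |xl| ≤ |xh| / 8) (hy : |yl| ≤ |yh| / 8)
    (h : SloppyFaithful p xh xl yh yl sh a' b' da db sl v w zh d zl)
    (hxy : ¬ SterbenzPair xh yh) : |w| ≤ |sh| := by
  set ε : ℝ := 2 ^ (1 - (p : ℤ))
  have ε_nonneg : 0 ≤ ε := by positivity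
  have ε_le : ε ≤ 1 / 16 :=
    calc ε ≤ (2 : ℝ) ^ (-4 : ℤ) := zpow_le_zpow_right₀ one_le_two (by lia)
      _ = 1 / 16 := by norm_num
  have rel_error : ∀ ⦃r r'⦄, Faithful p r r' → |r' - r| ≤ ε * |r| :=
    fun _ _ hr => hr.abs_sub_le (by lia)
  set S := |xh + yh|
  have sl_le := h.twoSum.abs_error_le_of_not_sterbenzPair ε_nonneg rel_error hxy
  have sh_ge : (1 - ε) * S ≤ |sh| := by
    linarith [rel_error h.twoSum.sum, abs_sub_abs_le_abs_sub (xh + yh) sh,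
      abs_sub_comm sh (xh + yh)]
  obtain ⟨-, -, -, -, -, -, hv, hw, -⟩ := h
  have v_le : |v| ≤ (1 + ε) * (3 / 8 * S) :=
    calc |v| ≤ (1 + ε) * |xl + yl| := abs_le_of_abs_sub_le_mul (rel_error hv)
      _ ≤ (1 + ε) * (3 / 8 * S) := by
        gcongr
        linarith [abs_add_le xl yl, abs_add_abs_le_of_not_sterbenzPair hxy]
  calc |w| ≤ (1 + ε) * |sl + v| := abs_le_of_abs_sub_le_mul (rel_error hw)
    _ ≤ (1 + ε) * (ε * (1 + ε) ^ 2 * (6 + 4 * ε + ε ^ 2) * S + (1 + ε) * (3 / 8 * S)) := by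
      gcongr; exact (abs_add_le _ _).trans (add_le_add sl_le v_le)
    _ = (1 + ε) * (ε * (1 + ε) ^ 2 * (6 + 4 * ε + ε ^ 2) + (1 + ε) * (3 / 8)) * S := by ring
    _ ≤ (1 + 1 / 16) * (1 / 16 * (1 + 1 / 16) ^ 2 * (6 + 4 * (1 / 16) + (1 / 16) ^ 2)
          + (1 + 1 / 16) * (3 / 8)) * S := by gcongr
    _ ≤ (1 - 1 / 16) * S := by gcongr; norm_num
    _ ≤ (1 - ε) * S := by gcongr
    _ ≤ |sh| := sh_ge

lemma abs_low_le_div_eight {u o h l : ℝ} (hu : 0 < u) (ho : o ≤ 1 / (8 * u))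
    (hl : |l| ≤ o * u * |h|) : |l| ≤ |h| / 8 :=
  calc |l| ≤ o * u * |h| := hl
    _ ≤ 1 / (8 * u) * u * |h| := by gcongr
    _ = |h| / 8 := by field_simp

theorem sloppy_sterbenz_of_w_gt_sh_general (hp : 5 ≤ p) (hxh : xh ∈ Fp p) (hyh : yh ∈ Fp p)
    (hx : |xl| ≤ |xh| / 8) (hy : |yl| ≤ |yh| / 8)
    (h : SloppyFaithful p xh xl yh yl sh a' b' da db sl v w zh d zl) (hw : |sh| < |w|) :
    SterbenzPair xh yh ∧ sh = xh + yh ∧ sl = 0 := by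
  have hxy : SterbenzPair xh yh := by
    by_contra hxy
    exact hw.not_ge (h.abs_le_abs_of_not_sterbenzPair hp hx hy hxy)
  have hadd : xh + yh ∈ Fp p := add_mem_Fp_of_abs_add_le_min hxh hyh hxy.abs_add_le_min
  exact ⟨hxy, h.twoSum.eq_add_and_error_eq_zero (fun _ _ hr => hr.eq_of_mem_s3) hxh hyh hadd
    (zero_mem_Fp p)⟩

end SloppyAddition

theorem sloppy_sterbenz_of_w_gt_sh
    (p : ℕ) (hp : 6 ≤ p) (u : ℝ) (hu : u = (2 : ℝ) ^ (1 - (p : ℤ)))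
    (ox oy : ℝ) (hox1 : 1 ≤ ox) (hox2 : ox ≤ 1 / (8 * u) - 2)
    (hoy1 : 1 ≤ oy) (hoy2 : oy ≤ 1 / (8 * u) - 2)
    (xh xl yh yl : ℝ)
    (hxh : xh ∈ Fp p) (hxl : xl ∈ Fp p) (hyh : yh ∈ Fp p) (hyl : yl ∈ Fp p)
    (hovx : |xl| ≤ ox * u * |xh|) (hovy : |yl| ≤ oy * u * |yh|)
    (sh a' b' da db sl v w zh d zl : ℝ)
    (hrun : SloppyFaithful p xh xl yh yl sh a' b' da db sl v w zh d zl) :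
    |sh| < |w| →
      xh * yh < 0 ∧ max |xh| |yh| ≤ 2 * min |xh| |yh| ∧ sh = xh + yh ∧ sl = 0 := by
  intro hw
  have hu0 : 0 < u := by rw [hu]; positivity
  have hx := abs_low_le_div_eight hu0 (by linarith) hovx
  have hy := abs_low_le_div_eight hu0 (by linarith) hovy
  obtain ⟨⟨hneg, hmax⟩, hsh, hsl⟩ :=
    sloppy_sterbenz_of_w_gt_sh_general (by lia) hxh hyh hx hy hrun hw
  exact ⟨hneg, hmax, hsh, hsl⟩
end
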